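/- arXiv:0801.0679 — 9 statements merged into one kernel-verified Lean document; each statement's English description precedes it below -/
import Mathlib

section
/- Let 𝔖 be a board with no isolated point. Then 2·𝓕(𝔖,ℤ) ⊆ V(𝔖,ℤ); that is, every function 𝔖 → ℤ all of whose values are even integers is a ℤ-linear combination of moves of 𝔖. -/
def dirs : Finset (ℤ × ℤ) := {(1,0), (-1,0), (0,1), (0,-1)}

def chi (X : ℤ × ℤ) : (ℤ × ℤ) → ℤ := fun Y => if Y = X then 1 else 0

def chiSet (I : Finset (ℤ × ℤ)) : (ℤ × ℤ) → ℤ := fun P => if P ∈ I then 1 else 0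

def IsMove (S : Finset (ℤ × ℤ)) (g : (ℤ × ℤ) → ℤ) : Prop :=
  ∃ P d : ℤ × ℤ, d ∈ dirs ∧ P ∈ S ∧ P + d ∈ S ∧ P + d + d ∈ S ∧
    g = chi P + chi (P + d) - chi (P + d + d)

def IsMiddle (S : Finset (ℤ × ℤ)) (Q : ℤ × ℤ) : Prop :=
  ∃ P d : ℤ × ℤ, d ∈ dirs ∧ P ∈ S ∧ P + d ∈ S ∧ P + d + d ∈ S ∧ Q = P + d

def Neighbor (S : Finset (ℤ × ℤ)) (A B : ℤ × ℤ) : Prop :=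
  ∃ d ∈ dirs, A ∈ S ∧ A + d ∈ S ∧ A + d + d ∈ S ∧ B = A + d + d

def NoIsolatedPoint (S : Finset (ℤ × ℤ)) : Prop :=
  ∀ P ∈ S, ∃ Q, Relation.EqvGen (Neighbor S) P Q ∧ IsMiddle S Q

def IsResourceCount (S : Finset (ℤ × ℤ)) (π : (ℤ × ℤ) → ℝ) : Prop :=
  ∀ P d : ℤ × ℤ, d ∈ dirs → P ∈ S → P + d ∈ S → P + d + d ∈ S →
    π (P + d + d) ≤ π P + π (P + d)

def LegalMove (S I : Finset (ℤ × ℤ)) (g : (ℤ × ℤ) → ℤ) (I' : Finset (ℤ × ℤ)) : Prop :=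
  ∃ P d : ℤ × ℤ, d ∈ dirs ∧ P ∈ S ∧ P + d ∈ S ∧ P + d + d ∈ S ∧
    g = chi P + chi (P + d) - chi (P + d + d) ∧
    P ∈ I ∧ P + d ∈ I ∧ P + d + d ∉ I ∧
    I' = (I \ {P, P + d}) ∪ {P + d + d}

def Transforms (S : Finset (ℤ × ℤ)) :
    List ((ℤ × ℤ) → ℤ) → Finset (ℤ × ℤ) → Finset (ℤ × ℤ) → Prop
  | [], I, J => I = J
  | g :: L, I, J => ∃ I', LegalMove S I g I' ∧ Transforms S L I' J

def boxProd (g₁ g₂ : (ℤ × ℤ) → ℤ) : Sym2 (ℤ × ℤ) → ℤ :=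
  Sym2.lift ⟨fun A B => if A = B then g₁ A * g₂ A else g₁ A * g₂ B + g₁ B * g₂ A, by
    intro A B
    by_cases h : A = B
    · subst h; rfl
    · simp only [if_neg h, if_neg (Ne.symm h)]; ring⟩

def moveAbs (g : (ℤ × ℤ) → ℤ) : (ℤ × ℤ) → ℤ := fun A => |g A|

def IsQMove (S : Finset (ℤ × ℤ)) (c : Sym2 (ℤ × ℤ) → ℤ) : Prop :=
  (∃ A g, A ∈ S ∧ IsMove S g ∧ g A = 0 ∧ c = boxProd (fun B => 2 * chi A B) g) ∨
  (∃ g, IsMove S g ∧ c = boxProd (moveAbs g) g)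

def StepList (S : Finset (ℤ × ℤ)) :
    List (Finset (ℤ × ℤ)) → List ((ℤ × ℤ) → ℤ) → Prop
  | [_], [] => True
  | I :: I' :: Ps, g :: L => LegalMove S I g I' ∧ StepList S (I' :: Ps) L
  | _, _ => False

def pOfSeq (A : ℤ × ℤ) : List (Finset (ℤ × ℤ)) → List ((ℤ × ℤ) → ℤ) → ℕ
  | I :: Ps, g :: L => (if g A ≠ 0 then 1 else if A ∈ I then 1 else 0) + pOfSeq A Ps L
  | _, _ => 0

def bothCount (A A' : ℤ × ℤ) : List ((ℤ × ℤ) → ℤ) → ℕ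
  | [] => 0
  | g :: L => (if g A ≠ 0 ∧ g A' ≠ 0 then 1 else 0) + bothCount A A' L

noncomputable def pagoda (P : ℤ × ℤ) : ℝ := ((Real.sqrt 5 - 1) / 2) ^ (P.1.natAbs + P.2.natAbs)

theorem neg_mem_dirs {d : ℤ × ℤ} (hd : d ∈ dirs) : -d ∈ dirs := by
  simp only [dirs, Finset.mem_insert, Finset.mem_singleton] at hd ⊢
  rcases hd with rfl | rfl | rfl | rfl <;> simp

theorem move_mem_span {S : Finset (ℤ × ℤ)} {P d : ℤ × ℤ} (hd : d ∈ dirs) (hP : P ∈ S)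
    (hQ : P + d ∈ S) (hR : P + d + d ∈ S) :
    chi P + chi (P + d) - chi (P + d + d) ∈ Submodule.span ℤ {f | IsMove S f} :=
  Submodule.subset_span ⟨P, d, hd, hP, hQ, hR, rfl⟩

theorem reverse_move_mem_span {S : Finset (ℤ × ℤ)} {P d : ℤ × ℤ} (hd : d ∈ dirs) (hP : P ∈ S)
    (hQ : P + d ∈ S) (hR : P + d + d ∈ S) :
    chi (P + d + d) + chi (P + d) - chi P ∈ Submodule.span ℤ {f | IsMove S f} := by
  have hmid : P + d + d + -d = P + d := by abel
  have hend : P + d + -d = P := by abel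
  have h := move_mem_span (S := S) (P := P + d + d) (neg_mem_dirs hd) hR
    (by rwa [hmid]) (by rwa [hmid, hend])
  rwa [hmid, hend] at h

theorem two_smul_chi_mem_span_of_isMiddle {S : Finset (ℤ × ℤ)} {Q : ℤ × ℤ}
    (hQ : IsMiddle S Q) : (2 : ℤ) • chi Q ∈ Submodule.span ℤ {f | IsMove S f} := by
  obtain ⟨P, d, hd, h₁, h₂, h₃, rfl⟩ := hQ
  convert add_mem (move_mem_span hd h₁ h₂ h₃) (reverse_move_mem_span hd h₁ h₂ h₃) using 1
  module

theorem two_smul_chi_sub_mem_span_of_eqvGen {S : Finset (ℤ × ℤ)} {A B : ℤ × ℤ}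
    (h : Relation.EqvGen (Neighbor S) A B) :
    (2 : ℤ) • chi A - (2 : ℤ) • chi B ∈ Submodule.span ℤ {f | IsMove S f} := by
  induction h with
  | rel A B h =>
    obtain ⟨d, hd, h₁, h₂, h₃, rfl⟩ := h
    convert sub_mem (move_mem_span hd h₁ h₂ h₃) (reverse_move_mem_span hd h₁ h₂ h₃) using 1
    module
  | refl A => simp
  | symm A B _ ih => simpa using neg_mem ih
  | trans A B C _ _ ih₁ ih₂ => simpa using add_mem ih₁ ih₂

theorem two_smul_chi_mem_span {S : Finset (ℤ × ℤ)} (hS : NoIsolatedPoint S) {P : ℤ × ℤ}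
    (hP : P ∈ S) : (2 : ℤ) • chi P ∈ Submodule.span ℤ {f | IsMove S f} := by
  obtain ⟨Q, hPQ, hQ⟩ := hS P hP
  simpa using add_mem (two_smul_chi_sub_mem_span_of_eqvGen hPQ)
    (two_smul_chi_mem_span_of_isMiddle hQ)

/-- If the board `S` has no isolated point, then `2·𝓕(S,ℤ) ⊆ V(S,ℤ)`: every
integer-valued function on the board all of whose values are even is a
`ℤ`-linear combination of moves. -/
theorem even_functions_in_move_span (S : Finset (ℤ × ℤ)) (hS : NoIsolatedPoint S)
    (g : (ℤ × ℤ) → ℤ) (hsupp : ∀ P, P ∉ S → g P = 0) (heven : ∀ P, 2 ∣ g P) :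
    g ∈ Submodule.span ℤ {f | IsMove S f} := by
  choose k hk using heven
  have hg : g = ∑ P ∈ S, k P • (2 : ℤ) • chi P := by
    funext X
    by_cases hX : X ∈ S
    · simp [chi, hX, hk X, mul_comm]
    · simp [chi, hX, hsupp X hX]
  rw [hg]
  exact Submodule.sum_mem _ fun P hP => Submodule.smul_mem _ _ (two_smul_chi_mem_span hS hP)
end

section
/- A board 𝔖 has no isolated point if and only if V(𝔖,ℤ) has maximal rank in 𝓕(𝔖,ℤ), i.e. if and only if the moves of 𝔖 span the full |𝔖|-dimensional space 𝓕(𝔖,ℚ) of functions 𝔖 → ℚ over ℚ. -/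
def suppSubmodule (S : Finset (ℤ × ℤ)) : Submodule ℚ ((ℤ × ℤ) → ℚ) where
  carrier := {h | ∀ P ∉ S, h P = 0}
  add_mem' := by
    intro a b ha hb P hP
    simp only [Pi.add_apply, ha P hP, hb P hP, add_zero]
  zero_mem' := by
    intro P hP
    rfl
  smul_mem' := by
    intro c a ha P hP
    simp only [Pi.smul_apply, ha P hP, smul_zero]

/-- The `ℚ`-span of the moves of a board. -/
def moveSpan (S : Finset (ℤ × ℤ)) : Submodule ℚ ((ℤ × ℤ) → ℚ) :=
  Submodule.span ℚ
    ((fun (f : (ℤ × ℤ) → ℤ) (P : ℤ × ℤ) => (f P : ℚ)) '' {f | IsMove S f})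

theorem single_add_single_sub_single_mem_moveSpan {S : Finset (ℤ × ℤ)} {P d : ℤ × ℤ}
    (hd : d ∈ dirs) (hP : P ∈ S) (hQ : P + d ∈ S) (hR : P + d + d ∈ S) :
    Pi.single P 1 + Pi.single (P + d) 1 - Pi.single (P + d + d) 1 ∈ moveSpan S := by
  refine Submodule.subset_span ⟨_, ⟨P, d, hd, hP, hQ, hR, rfl⟩, ?_⟩
  funext X
  simp [chi, Pi.single_apply]

theorem single_sub_single_add_single_mem_moveSpan {S : Finset (ℤ × ℤ)} {P d : ℤ × ℤ}
    (hd : d ∈ dirs) (hP : P ∈ S) (hQ : P + d ∈ S) (hR : P + d + d ∈ S) :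
    Pi.single (P + d + d) 1 + Pi.single (P + d) 1 - Pi.single P 1 ∈ moveSpan S := by
  have h := single_add_single_sub_single_mem_moveSpan (S := S) (P := P + d + d)
    (neg_mem_dirs hd) hR (by simpa using hQ) (by simpa using hP)
  simpa using h

theorem single_middle_mem_moveSpan {S : Finset (ℤ × ℤ)} {P d : ℤ × ℤ}
    (hd : d ∈ dirs) (hP : P ∈ S) (hQ : P + d ∈ S) (hR : P + d + d ∈ S) :
    Pi.single (P + d) 1 ∈ moveSpan S := by
  have h := (moveSpan S).smul_mem (1 / 2 : ℚ) ((moveSpan S).add_mem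
    (single_add_single_sub_single_mem_moveSpan hd hP hQ hR)
    (single_sub_single_add_single_mem_moveSpan hd hP hQ hR))
  convert h using 1
  module

theorem single_mem_moveSpan_iff_of_neighbor {S : Finset (ℤ × ℤ)} {A B : ℤ × ℤ}
    (h : Neighbor S A B) :
    Pi.single A 1 ∈ moveSpan S ↔ Pi.single B 1 ∈ moveSpan S := by
  obtain ⟨d, hd, hP, hQ, hR, rfl⟩ := h
  have hsub : Pi.single A 1 - Pi.single (A + d + d) 1 ∈ moveSpan S := by
    have h := (moveSpan S).sub_mem
      (single_add_single_sub_single_mem_moveSpan hd hP hQ hR)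
      (single_middle_mem_moveSpan hd hP hQ hR)
    convert h using 1
    module
  constructor <;> intro h
  · simpa using (moveSpan S).sub_mem h hsub
  · simpa using (moveSpan S).add_mem hsub h

theorem single_mem_moveSpan_iff_of_eqvGen {S : Finset (ℤ × ℤ)} {A B : ℤ × ℤ}
    (h : Relation.EqvGen (Neighbor S) A B) :
    Pi.single A 1 ∈ moveSpan S ↔ Pi.single B 1 ∈ moveSpan S := by
  induction h with
  | rel _ _ h => exact single_mem_moveSpan_iff_of_neighbor h
  | refl _ => exact Iff.rfl
  | symm _ _ _ ih => exact ih.symm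
  | trans _ _ _ _ _ ih₁ ih₂ => exact ih₁.trans ih₂

theorem moveSpan_le_suppSubmodule (S : Finset (ℤ × ℤ)) : moveSpan S ≤ suppSubmodule S := by
  refine Submodule.span_le.2 ?_
  rintro _ ⟨_, ⟨P, d, -, hP, hQ, hR, rfl⟩, rfl⟩ X hX
  have h₁ : X ≠ P := fun h => hX (h ▸ hP)
  have h₂ : X ≠ P + d := fun h => hX (h ▸ hQ)
  have h₃ : X ≠ P + d + d := fun h => hX (h ▸ hR)
  simp [chi, h₁, h₂, h₃]

theorem suppSubmodule_le_of_single_mem {S : Finset (ℤ × ℤ)}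
    {V : Submodule ℚ ((ℤ × ℤ) → ℚ)} (h : ∀ P ∈ S, Pi.single P 1 ∈ V) :
    suppSubmodule S ≤ V := by
  intro f hf
  have hsum : f = ∑ P ∈ S, f P • (Pi.single P 1 : (ℤ × ℤ) → ℚ) := by
    funext X
    by_cases hX : X ∈ S
    · simp [Finset.sum_apply, Pi.single_apply, hX]
    · simp [Finset.sum_apply, Pi.single_apply, hX, hf X hX]
  rw [hsum]
  exact V.sum_mem fun P hP => V.smul_mem _ (h P hP)

open Classical in
/-- A set of points that contains no middle point and is closed under the neighbor relation
is annihilated by every move. -/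
theorem sum_filter_eq_zero_of_mem_moveSpan {S : Finset (ℤ × ℤ)} {C : Set (ℤ × ℤ)}
    (hC : ∀ A B, Neighbor S A B → (A ∈ C ↔ B ∈ C)) (hmid : ∀ Q ∈ C, ¬ IsMiddle S Q)
    {f : (ℤ × ℤ) → ℚ} (hf : f ∈ moveSpan S) : ∑ X ∈ S with X ∈ C, f X = 0 := by
  induction hf using Submodule.span_induction with
  | mem f hf =>
    obtain ⟨_, ⟨P, d, hd, hP, hQ, hR, rfl⟩, rfl⟩ := hf
    have hPR := hC P (P + d + d) ⟨d, hd, hP, hQ, hR, rfl⟩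
    have hQC : P + d ∉ C := fun h => hmid _ h ⟨P, d, hd, hP, hQ, hR, rfl⟩
    simp [chi, Finset.sum_add_distrib, Finset.sum_sub_distrib, hP, hQ, hR, hQC, hPR]
  | zero => simp
  | add f g _ _ hf hg => simp [Finset.sum_add_distrib, hf, hg]
  | smul c f _ hf => simp [← Finset.mul_sum, hf]

/-- A board has no isolated point iff the moves span, over `ℚ`, the full space
of rational-valued functions on the board. -/
theorem no_isolated_iff_full_rank (S : Finset (ℤ × ℤ)) :
    NoIsolatedPoint S ↔
      Submodule.span ℚ
          ((fun (f : (ℤ × ℤ) → ℤ) (P : ℤ × ℤ) => (f P : ℚ)) '' {f | IsMove S f})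
        = suppSubmodule S := by
  change NoIsolatedPoint S ↔ moveSpan S = suppSubmodule S
  constructor
  · intro h
    refine le_antisymm (moveSpan_le_suppSubmodule S) (suppSubmodule_le_of_single_mem ?_)
    intro P hP
    obtain ⟨_, hPQ, A, d, hd, hA, hQ, hR, rfl⟩ := h P hP
    exact (single_mem_moveSpan_iff_of_eqvGen hPQ).2 (single_middle_mem_moveSpan hd hA hQ hR)
  · intro h P hP
    by_contra! hmid
    have hmem : Pi.single P 1 ∈ moveSpan S := by
      rw [h]
      intro X hX
      have hXP : X ≠ P := fun hXP => hX (hXP ▸ hP)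
      exact Pi.single_eq_of_ne hXP 1
    have hzero := sum_filter_eq_zero_of_mem_moveSpan
      (C := {Q | Relation.EqvGen (Neighbor S) P Q})
      (fun A B hAB => ⟨fun hA => hA.trans _ _ _ (.rel _ _ hAB),
        fun hB => hB.trans _ _ _ (.symm _ _ (.rel _ _ hAB))⟩)
      hmid hmem
    simp [Pi.single_apply, hP, Relation.EqvGen.refl] at hzero
end

section
/- Let π be a resource count on the board 𝔖. If one can go from the position I to the position J in legal moves, then ⟨π, χ_I⟩ ≥ ⟨π, χ_J⟩, i.e. Σ_{A∈I} π(A) ≥ Σ_{A∈J} π(A). -/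
/-- A single legal move does not increase the total of a resource count. -/
theorem LegalMove.sum_le {S I I' : Finset (ℤ × ℤ)} {g : (ℤ × ℤ) → ℤ} {π : (ℤ × ℤ) → ℝ}
    (hπ : IsResourceCount S π) (h : LegalMove S I g I') :
    ∑ A ∈ I', π A ≤ ∑ A ∈ I, π A := by
  obtain ⟨P, d, hd, hP, hQ, hR, -, hPI, hQI, hRI, rfl⟩ := h
  have hd0 : d ≠ 0 := by
    rintro rfl
    exact absurd hd (by decide)
  have hPQ : P ≠ P + d := by simpa using hd0
  have hsub : {P, P + d} ⊆ I := by
    simp [Finset.insert_subset_iff, hPI, hQI]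
  have hdisj : Disjoint (I \ {P, P + d}) {P + d + d} :=
    Finset.disjoint_singleton_right.2 fun hmem => hRI (Finset.mem_sdiff.1 hmem).1
  rw [Finset.sum_union hdisj, Finset.sum_singleton, ← Finset.sum_sdiff hsub,
    Finset.sum_pair hPQ]
  gcongr
  exact hπ P d hd hP hQ hR

/-- A resource count does not increase along legal moves:
if one can go from `I` to `J`, then `⟨π,χ_I⟩ ≥ ⟨π,χ_J⟩`. -/
theorem resource_count_monotone (S : Finset (ℤ × ℤ)) (π : (ℤ × ℤ) → ℝ)
    (hπ : IsResourceCount S π) (I J : Finset (ℤ × ℤ)) (hI : I ⊆ S)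
    (L : List ((ℤ × ℤ) → ℤ)) (h : Transforms S L I J) :
    ∑ A ∈ J, π A ≤ ∑ A ∈ I, π A := by
  clear hI
  induction L generalizing I with
  | nil => exact (congrArg (fun K => ∑ A ∈ K, π A) h).ge
  | cons g L ih =>
    obtain ⟨I', hstep, hrest⟩ := h
    exact (ih I' hrest).trans (hstep.sum_le hπ)
end

section
/- Let ρ = (√5 − 1)/2 and define π : ℤ² → ℝ by π(a,b) = ρ^{|a|+|b|}. Then for every P ∈ ℤ² and every d ∈ {(1,0),(−1,0),(0,1),(0,−1)}, one has π(P) + π(P + d) ≥ π(P + 2d); that is, π restricts to a resource count on every board. -/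
/-- If `ρ² + ρ = 1` with `0 ≤ ρ`, then `ρ ^ k` is at most `ρ ^ n + ρ ^ m` as soon as
`n ≤ k + 2` and `m ≤ k + 1`. -/
lemma pow_le_pow_add_pow_of_sq_add_self_eq_one {ρ : ℝ} (h0 : 0 ≤ ρ) (h : ρ ^ 2 + ρ = 1)
    {n m k : ℕ} (hn : n ≤ k + 2) (hm : m ≤ k + 1) : ρ ^ k ≤ ρ ^ n + ρ ^ m := by
  have h1 : ρ ≤ 1 := by nlinarith
  calc ρ ^ k = ρ ^ k * (ρ ^ 2 + ρ) := by rw [h, mul_one]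
    _ = ρ ^ (k + 2) + ρ ^ (k + 1) := by ring
    _ ≤ ρ ^ n + ρ ^ m :=
      add_le_add (pow_le_pow_of_le_one h0 h1 hn) (pow_le_pow_of_le_one h0 h1 hm)

lemma pagoda_add_add_le {d : ℤ × ℤ} (hd : d ∈ dirs) (P : ℤ × ℤ) :
    pagoda (P + d + d) ≤ pagoda P + pagoda (P + d) := by
  have h5 : Real.sqrt 5 ^ 2 = 5 := Real.sq_sqrt (by norm_num)
  have h1 : 1 ≤ Real.sqrt 5 := Real.one_le_sqrt.mpr (by norm_num)
  simp only [dirs, Finset.mem_insert, Finset.mem_singleton] at hd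
  apply pow_le_pow_add_pow_of_sq_add_self_eq_one (by linarith) (by linear_combination h5 / 4) <;>
    rcases hd with rfl | rfl | rfl | rfl <;> simp only [Prod.fst_add, Prod.snd_add] <;> omega

/-- With `ρ = (√5 − 1)/2`, the function `π(a,b) = ρ^{|a|+|b|}` satisfies
`π(P) + π(P+d) ≥ π(P+2d)` for every `P` and direction `d`; in particular it
restricts to a resource count on every board. -/
theorem pagoda_is_resource_count :
    (∀ P d : ℤ × ℤ, d ∈ dirs → pagoda (P + d + d) ≤ pagoda P + pagoda (P + d)) ∧
      ∀ S : Finset (ℤ × ℤ), IsResourceCount S pagoda := by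
  exact ⟨fun P _ hd => pagoda_add_add_le hd P, fun _ P _ hd _ _ _ => pagoda_add_add_le hd P⟩
end

section
/- Let 𝔖 be a board, let I and J be positions on 𝔖, and suppose χ_I − χ_J = Σ_{g∈𝒟(𝔖)} x(g)·g with all x(g) nonnegative integers. Then x(g₀) ≤ 17 for every move g₀ ∈ 𝒟(𝔖); i.e. the thickness of any move on any board is bounded above by 17. -/
lemma golden_sq_add_self : ((Real.sqrt 5 - 1) / 2) ^ 2 + (Real.sqrt 5 - 1) / 2 = 1 := by
  have h : Real.sqrt 5 ^ 2 = 5 := Real.sq_sqrt (by norm_num)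
  linarith

lemma golden_pos : 0 < (Real.sqrt 5 - 1) / 2 := by
  have h : (1 : ℝ) < Real.sqrt 5 := Real.lt_sqrt_of_sq_lt (by norm_num)
  linarith

lemma golden_lt : (Real.sqrt 5 - 1) / 2 < 0.6181 := by
  have h : Real.sqrt 5 < 2.2362 := (Real.sqrt_lt' (by norm_num)).2 (by norm_num)
  linarith

lemma pagoda_nonneg (P : ℤ × ℤ) : 0 ≤ pagoda P := pow_nonneg golden_pos.le _

lemma natAbs_le_of_mem_dirs (P : ℤ × ℤ) {d : ℤ × ℤ} (hd : d ∈ dirs) :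
    P.1.natAbs + P.2.natAbs ≤ (P + d).1.natAbs + (P + d).2.natAbs + 1 := by
  simp only [dirs, Finset.mem_insert, Finset.mem_singleton] at hd
  rcases hd with rfl | rfl | rfl | rfl <;> simp only [Prod.fst_add, Prod.snd_add] <;> omega

/-- `pagoda` is a resource count on the whole lattice. -/
lemma pagoda_le_add (P : ℤ × ℤ) {d : ℤ × ℤ} (hd : d ∈ dirs) :
    pagoda (P + d + d) ≤ pagoda P + pagoda (P + d) := by
  have h₁ := natAbs_le_of_mem_dirs P hd
  have h₂ := natAbs_le_of_mem_dirs (P + d) hd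
  have hlt := golden_lt
  have hs1 : (Real.sqrt 5 - 1) / 2 ≤ 1 := by linarith
  unfold pagoda
  set n := (P + d + d).1.natAbs + (P + d + d).2.natAbs
  have hP := pow_le_pow_of_le_one golden_pos.le hs1 
    (show P.1.natAbs + P.2.natAbs ≤ n + 2 by omega)
  have hPd := pow_le_pow_of_le_one golden_pos.le hs1 h₂
  calc ((Real.sqrt 5 - 1) / 2) ^ n
      = ((Real.sqrt 5 - 1) / 2) ^ (n + 2) + ((Real.sqrt 5 - 1) / 2) ^ (n + 1) := by
        rw [pow_add _ n 2, pow_succ _ n, ← mul_add, golden_sq_add_self, mul_one]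
    _ ≤ _ := add_le_add hP hPd

lemma sum_pow_natAbs_le {r : ℝ} (h₀ : 0 ≤ r) (h₁ : r < 1) (A : Finset ℤ) :
    ∑ k ∈ A, r ^ k.natAbs ≤ (1 + r) / (1 - r) := by
  have hgeom := hasSum_geometric_of_lt_one h₀ h₁
  have hneg : HasSum (fun n : ℕ => r ^ (-((n : ℤ) + 1)).natAbs) (r * (1 - r)⁻¹) := by
    refine (hgeom.mul_left r).congr_fun ?_
    intro n
    rw [show (-((n : ℤ) + 1)).natAbs = n + 1 by omega, pow_succ']
  have hsum : HasSum (fun k : ℤ => r ^ k.natAbs) ((1 - r)⁻¹ + r * (1 - r)⁻¹) :=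
    HasSum.of_nat_of_neg_add_one (by simpa using hgeom) hneg
  refine (sum_le_hasSum A (fun k _ => pow_nonneg h₀ _) hsum).trans_eq ?_
  rw [div_eq_mul_inv]
  ring

lemma sum_pagoda_lt (T : Finset (ℤ × ℤ)) : ∑ P ∈ T, pagoda P < 18 := by
  have hpos := golden_pos
  have hlt := golden_lt
  have hs1 : (Real.sqrt 5 - 1) / 2 < 1 := by linarith
  calc ∑ P ∈ T, pagoda P
      ≤ ∑ P ∈ T.image Prod.fst ×ˢ T.image Prod.snd, pagoda P :=
        Finset.sum_le_sum_of_subset_of_nonneg Finset.subset_product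
          fun P _ _ => pagoda_nonneg P
    _ = (∑ k ∈ T.image Prod.fst, ((Real.sqrt 5 - 1) / 2) ^ k.natAbs) *
          ∑ k ∈ T.image Prod.snd, ((Real.sqrt 5 - 1) / 2) ^ k.natAbs := by
        rw [Finset.sum_product, Finset.sum_mul_sum]
        simp only [pagoda, pow_add]
    _ ≤ ((1 + (Real.sqrt 5 - 1) / 2) / (1 - (Real.sqrt 5 - 1) / 2)) *
          ((1 + (Real.sqrt 5 - 1) / 2) / (1 - (Real.sqrt 5 - 1) / 2)) := by
        have hq : 0 ≤ (1 + (Real.sqrt 5 - 1) / 2) / (1 - (Real.sqrt 5 - 1) / 2) :=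
          div_nonneg (by linarith) (by linarith)
        exact mul_le_mul (sum_pow_natAbs_le hpos.le hs1 _) (sum_pow_natAbs_le hpos.le hs1 _)
          (Finset.sum_nonneg fun k _ => pow_nonneg hpos.le _) hq
    _ < 18 := by
        have hd : 0 < 1 - (Real.sqrt 5 - 1) / 2 := by linarith
        rw [div_mul_div_comm, div_lt_iff₀ (mul_pos hd hd)]
        nlinarith

lemma sum_pagoda_translate_lt (S : Finset (ℤ × ℤ)) (Q : ℤ × ℤ) :
    ∑ P ∈ S, pagoda (P - Q) < 18 := by
  rw [← Finset.sum_image (f := pagoda) (g := fun P => P - Q)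
    fun P _ P' _ h => sub_left_injective h]
  exact sum_pagoda_lt _

lemma sum_move_mul {S : Finset (ℤ × ℤ)} {P d : ℤ × ℤ} (hP : P ∈ S) (hPd : P + d ∈ S)
    (hPdd : P + d + d ∈ S) (w : ℤ × ℤ → ℝ) :
    ∑ A ∈ S, ((chi P + chi (P + d) - chi (P + d + d)) A : ℝ) * w A =
      w P + w (P + d) - w (P + d + d) := by
  simp only [Pi.sub_apply, Pi.add_apply, chi, Int.cast_sub, Int.cast_add, Int.cast_ite,
    Int.cast_one, Int.cast_zero, sub_mul, add_mul, Finset.sum_sub_distrib, Finset.sum_add_distrib,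
    ite_mul, one_mul, zero_mul, Finset.sum_ite_eq', hP, hPd, hPdd, if_true]

lemma sum_chiSet_sub_mul_le (S I J : Finset (ℤ × ℤ)) {w : ℤ × ℤ → ℝ} (hw : ∀ P, 0 ≤ w P) :
    ∑ A ∈ S, ((chiSet I - chiSet J) A : ℝ) * w A ≤ ∑ A ∈ S, w A := by
  refine Finset.sum_le_sum fun A _ => ?_
  have h := hw A
  simp only [Pi.sub_apply, chiSet]
  split_ifs <;> norm_num <;> linarith

/-- Universal thickness bound: if `χ_I − χ_J = Σ_{g ∈ 𝒟(S)} x(g)·g` with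
nonnegative integer coefficients, then every coefficient satisfies `x(g₀) ≤ 17`. -/
theorem universal_thickness_bound (S I J : Finset (ℤ × ℤ)) (hI : I ⊆ S) (hJ : J ⊆ S)
    (D : Finset ((ℤ × ℤ) → ℤ)) (hD : ∀ g, g ∈ D ↔ IsMove S g)
    (x : ((ℤ × ℤ) → ℤ) → ℕ)
    (hx : chiSet I - chiSet J = ∑ g ∈ D, (x g : ℤ) • g)
    (g₀ : (ℤ × ℤ) → ℤ) (hg₀ : g₀ ∈ D) :
    x g₀ ≤ 17 := by
  obtain ⟨P, d, hd, hP, hPd, hPdd, hg₀eq⟩ := (hD g₀).1 hg₀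
  set w : ℤ × ℤ → ℝ := fun A => pagoda (A - (P + d)) with hw
  have hval : ∑ A ∈ S, (g₀ A : ℝ) * w A = 1 := by
    rw [hg₀eq, sum_move_mul hP hPd hPdd]
    simp [hw, pagoda]
  have hnonneg : ∀ g ∈ D, 0 ≤ ∑ A ∈ S, (g A : ℝ) * w A := by
    intro g hg
    obtain ⟨P', e, he, h₁, h₂, h₃, rfl⟩ := (hD g).1 hg
    rw [sum_move_mul h₁ h₂ h₃]
    have key := pagoda_le_add (P' - (P + d)) he
    rw [sub_add_eq_add_sub, sub_add_eq_add_sub] at key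
    exact sub_nonneg.2 key
  have hexp : ∑ A ∈ S, ((chiSet I - chiSet J) A : ℝ) * w A =
      ∑ g ∈ D, (x g : ℝ) * ∑ A ∈ S, (g A : ℝ) * w A := by
    rw [hx]
    simp only [Finset.sum_apply, Pi.smul_apply, smul_eq_mul, Int.cast_sum, Int.cast_mul,
      Int.cast_natCast, Finset.sum_mul, Finset.mul_sum, mul_assoc]
    exact Finset.sum_comm
  have hlt : (x g₀ : ℝ) < 18 := by
    calc (x g₀ : ℝ) = (x g₀ : ℝ) * ∑ A ∈ S, (g₀ A : ℝ) * w A := by rw [hval, mul_one]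
      _ ≤ ∑ g ∈ D, (x g : ℝ) * ∑ A ∈ S, (g A : ℝ) * w A :=
        Finset.single_le_sum (f := fun g => (x g : ℝ) * ∑ A ∈ S, (g A : ℝ) * w A)
          (fun g hg => mul_nonneg (Nat.cast_nonneg _) (hnonneg g hg)) hg₀
      _ ≤ ∑ A ∈ S, w A := hexp ▸ sum_chiSet_sub_mul_le S I J fun _ => pagoda_nonneg _
      _ < 18 := sum_pagoda_translate_lt S (P + d)
  exact Nat.lt_succ_iff.1 (by exact_mod_cast hlt)
end

section
/- If the position J is obtained from the position I by a single legal move g, then χ_I⊠χ_I = χ_J⊠χ_J + |g|⊠g + Σ_{A∈J, g(A)=0} 2χ_A⊠g. -/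
theorem boxProd_mk (f g : (ℤ × ℤ) → ℤ) (A B : ℤ × ℤ) :
    boxProd f g s(A, B) = if A = B then f A * g A else f A * g B + f B * g A :=
  rfl

theorem boxProd_comm (f g : (ℤ × ℤ) → ℤ) : boxProd f g = boxProd g f := by
  ext x
  induction x using Sym2.ind with
  | _ A B =>
    simp only [boxProd_mk]
    split_ifs <;> ring

theorem boxProd_add_left (f₁ f₂ g : (ℤ × ℤ) → ℤ) :
    boxProd (f₁ + f₂) g = boxProd f₁ g + boxProd f₂ g := by
  ext x
  induction x using Sym2.ind with
  | _ A B =>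
    simp only [boxProd_mk, Pi.add_apply]
    split_ifs <;> ring

theorem boxProd_add_right (f g₁ g₂ : (ℤ × ℤ) → ℤ) :
    boxProd f (g₁ + g₂) = boxProd f g₁ + boxProd f g₂ := by
  simp only [boxProd_comm f, boxProd_add_left]

theorem boxProd_zero_left (g : (ℤ × ℤ) → ℤ) : boxProd 0 g = 0 := by
  simpa using boxProd_add_left 0 0 g

theorem boxProd_sum_left {ι : Type*} (s : Finset ι) (f : ι → (ℤ × ℤ) → ℤ) (g : (ℤ × ℤ) → ℤ) :
    boxProd (∑ i ∈ s, f i) g = ∑ i ∈ s, boxProd (f i) g := by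
  classical
  induction s using Finset.induction_on with
  | empty => simpa using boxProd_zero_left g
  | insert i s hi ih => rw [Finset.sum_insert hi, Finset.sum_insert hi, boxProd_add_left, ih]

/-- Polarization: the difference of two squares is the sum times the difference. -/
theorem boxProd_add_self (f g : (ℤ × ℤ) → ℤ) :
    boxProd (f + g) (f + g) = boxProd f f + boxProd (f + g + f) g := by
  simp only [boxProd_add_left, boxProd_add_right, boxProd_comm g f]
  abel

theorem sum_two_mul_chi (T : Finset (ℤ × ℤ)) :
    ∑ A ∈ T, (fun B => 2 * chi A B) = fun B => 2 * chiSet T B := by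
  ext B
  simp [chi, chiSet, Finset.sum_apply]

theorem ne_zero_of_mem_dirs {d : ℤ × ℤ} (hd : d ∈ dirs) : d ≠ 0 := by
  rintro rfl
  revert hd
  decide

theorem LegalMove.chiSet_eq {S I J : Finset (ℤ × ℤ)} {g : (ℤ × ℤ) → ℤ}
    (h : LegalMove S I g J) : chiSet I = chiSet J + g := by
  obtain ⟨P, d, hd, -, -, -, rfl, hP, hQ, hR, rfl⟩ := h
  have hPQ : P ≠ P + d := by simpa using ne_zero_of_mem_dirs hd
  ext B
  simp only [chiSet, chi, Pi.add_apply, Pi.sub_apply, Finset.mem_union, Finset.mem_sdiff,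
    Finset.mem_insert, Finset.mem_singleton]
  generalize P + d + d = R at *
  generalize P + d = Q at *
  grind

theorem LegalMove.chiSet_add_chiSet {S I J : Finset (ℤ × ℤ)} {g : (ℤ × ℤ) → ℤ}
    (h : LegalMove S I g J) :
    chiSet I + chiSet J = moveAbs g + fun B => 2 * chiSet (J.filter fun A => g A = 0) B := by
  have hg : ∀ B, chiSet I B = chiSet J B + g B := congrFun h.chiSet_eq
  ext B
  specialize hg B
  simp only [chiSet, moveAbs, Pi.add_apply, Finset.mem_filter] at hg ⊢
  grind

/-- If `J` is obtained from `I` by the single legal move `g`, then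
`χ_I⊠χ_I = χ_J⊠χ_J + |g|⊠g + Σ_{A ∈ J, g(A)=0} 2χ_A⊠g`. -/
theorem quadratic_move_identity (S I J : Finset (ℤ × ℤ)) (g : (ℤ × ℤ) → ℤ)
    (h : LegalMove S I g J) :
    boxProd (chiSet I) (chiSet I) =
      boxProd (chiSet J) (chiSet J) + boxProd (moveAbs g) g +
        ∑ A ∈ J.filter (fun A => g A = 0), boxProd (fun B => 2 * chi A B) g := by
  rw [← boxProd_sum_left, sum_two_mul_chi, add_assoc, ← boxProd_add_left, ← h.chiSet_add_chiSet,
    h.chiSet_eq, boxProd_add_self]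
end

section
/- Let 𝔖 be a board and I, J be positions on 𝔖. If χ_I⊠χ_I − χ_J⊠χ_J belongs to V⁺(𝔖⊠𝔖,ℤ), then χ_I − χ_J belongs to V⁺(𝔖,ℤ), the set of linear combinations of moves of 𝔖 with nonnegative integer coefficients. (The simple quadratic test implies the nonnegative integer linear test.) -/
/-- Restriction of a function on unordered pairs to the diagonal. -/
def diagRestrict : (Sym2 (ℤ × ℤ) → ℤ) →+ ((ℤ × ℤ) → ℤ) where
  toFun c := fun A => c s(A, A)
  map_zero' := rfl
  map_add' _ _ := rfl

theorem diagRestrict_boxProd (g₁ g₂ : (ℤ × ℤ) → ℤ) : diagRestrict (boxProd g₁ g₂) = g₁ * g₂ := by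
  funext A
  simp [diagRestrict, boxProd]

theorem chiSet_mul_self (I : Finset (ℤ × ℤ)) : chiSet I * chiSet I = chiSet I := by
  funext A
  simp [chiSet]

theorem IsMove.moveAbs_mul_self {S : Finset (ℤ × ℤ)} {g : (ℤ × ℤ) → ℤ} (hg : IsMove S g) :
    moveAbs g * g = g := by
  obtain ⟨P, d, hd, -, -, -, rfl⟩ := hg
  have hd0 : d ≠ 0 := by
    rintro rfl
    exact absurd hd (by decide)
  funext A
  simp only [Pi.mul_apply, moveAbs, Pi.add_apply, Pi.sub_apply, chi]
  have hPQ : A = P → A ≠ P + d := by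
    rintro rfl
    simpa using hd0
  split_ifs <;> simp_all

theorem IsQMove.diagRestrict_mem {S : Finset (ℤ × ℤ)} {c : Sym2 (ℤ × ℤ) → ℤ}
    (hc : IsQMove S c) : diagRestrict c ∈ AddSubmonoid.closure {g | IsMove S g} := by
  rcases hc with ⟨A, g, -, -, hgA, rfl⟩ | ⟨g, hg, rfl⟩
  · have hzero : diagRestrict (boxProd (fun B => 2 * chi A B) g) = 0 := by
      rw [diagRestrict_boxProd]
      funext B
      by_cases hB : B = A <;> simp [chi, hB, hgA]
    rw [hzero]
    exact zero_mem _
  · rw [diagRestrict_boxProd, hg.moveAbs_mul_self]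
    exact AddSubmonoid.subset_closure hg

/-- The simple quadratic test implies the nonnegative-integer linear test:
if `χ_I⊠χ_I − χ_J⊠χ_J ∈ V⁺(S⊠S,ℤ)` then `χ_I − χ_J ∈ V⁺(S,ℤ)`. -/
theorem quadratic_test_implies_linear_test (S I J : Finset (ℤ × ℤ)) (hI : I ⊆ S) (hJ : J ⊆ S)
    (h : boxProd (chiSet I) (chiSet I) - boxProd (chiSet J) (chiSet J) ∈
      AddSubmonoid.closure {c | IsQMove S c}) :
    chiSet I - chiSet J ∈ AddSubmonoid.closure {g | IsMove S g} := by
  have hle : AddSubmonoid.closure {c | IsQMove S c} ≤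
      (AddSubmonoid.closure {g | IsMove S g}).comap diagRestrict :=
    AddSubmonoid.closure_le.2 fun _ hc => hc.diagRestrict_mem
  simpa only [AddSubmonoid.mem_comap, map_sub, diagRestrict_boxProd, chiSet_mul_self] using hle h
end

section
/- Let 𝓕 = (g₁,…,g_k) be a sequence of legal moves transforming the position I into the position J. Then Σ_{A∈𝔖} 𝔭(A,𝓕) = (|I| − |J|)·(|I| + |J| + 3)/2. -/
theorem LegalMove.subset {S I I' : Finset (ℤ × ℤ)} {g : (ℤ × ℤ) → ℤ}
    (h : LegalMove S I g I') (hI : I ⊆ S) : I' ⊆ S := by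
  obtain ⟨P, d, -, -, -, hR, -, -, -, -, rfl⟩ := h
  exact Finset.union_subset (Finset.sdiff_subset.trans hI) (Finset.singleton_subset_iff.2 hR)

theorem LegalMove.card {S I I' : Finset (ℤ × ℤ)} {g : (ℤ × ℤ) → ℤ}
    (h : LegalMove S I g I') : I'.card + 1 = I.card := by
  obtain ⟨P, d, -, -, -, -, -, hP, hQ, hR, rfl⟩ := h
  have hPQ : P ≠ P + d := by
    intro h
    have : d = 0 := by simpa using h
    exact hR (by simpa [this] using hP)
  have hsub : {P, P + d} ⊆ I := by simp [Finset.insert_subset_iff, hP, hQ]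
  have hle := Finset.card_le_card hsub
  rw [Finset.card_union_of_disjoint (by simp [hR]), Finset.card_sdiff_of_subset hsub]
  rw [Finset.card_pair hPQ] at *
  simp
  omega

/-- The points counted by a legal move are those of the position together with the target. -/
theorem LegalMove.sum_ite {S I I' : Finset (ℤ × ℤ)} {g : (ℤ × ℤ) → ℤ}
    (h : LegalMove S I g I') (hI : I ⊆ S) :
    ∑ A ∈ S, (if g A ≠ 0 then 1 else if A ∈ I then 1 else 0) = I.card + 1 := by
  obtain ⟨P, d, -, -, -, hRS, rfl, hP, hQ, hR, -⟩ := h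
  have hRP : P + d + d ≠ P := fun h => hR (h.symm ▸ hP)
  have hRQ : P + d + d ≠ P + d := fun h => hR (h.symm ▸ hQ)
  have key : ∀ A, (if (chi P + chi (P + d) - chi (P + d + d)) A ≠ 0 then 1
      else if A ∈ I then 1 else 0) = if A ∈ insert (P + d + d) I then 1 else 0 := by
    intro A
    by_cases hA : A = P + d + d
    · subst hA
      simp [chi, hRP]
      grind
    · by_cases hAI : A ∈ I
      · simp [hAI]
      · have h1 : A ≠ P := fun h => hAI (h ▸ hP)
        have h2 : A ≠ P + d := fun h => hAI (h ▸ hQ)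
        simp [chi, hA, hAI, h1, h2]
  rw [Finset.sum_congr rfl fun A _ => key A, Finset.sum_ite_mem,
    Finset.inter_eq_right.2 (Finset.insert_subset hRS hI)]
  simp [hR]

/-- For a sequence `𝓕` of legal moves going from `I` to `J`,
`Σ_{A ∈ S} 𝔭(A,𝓕) = (|I| − |J|)(|I| + |J| + 3)/2`. -/
theorem sum_p_eq (S I J : Finset (ℤ × ℤ)) (hI : I ⊆ S)
    (Ls : List (Finset (ℤ × ℤ))) (L : List ((ℤ × ℤ) → ℤ))
    (hstep : StepList S Ls L) (hhead : Ls.head? = some I) (hlast : Ls.getLast? = some J) :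
    (2 : ℤ) * ∑ A ∈ S, (pOfSeq A Ls L : ℤ) =
      ((I.card : ℤ) - (J.card : ℤ)) * ((I.card : ℤ) + (J.card : ℤ) + 3) := by
  induction L generalizing I Ls with
  | nil =>
    match Ls, hstep with
    | [K], _ =>
      obtain rfl : K = I := by simpa using hhead
      obtain rfl : K = J := by simpa using hlast
      simp [pOfSeq]
  | cons g L ih =>
    match Ls, hstep with
    | K :: I' :: Ps, hstep =>
      obtain ⟨hmove, hrest⟩ := hstep
      obtain rfl : K = I := by simpa using hhead
      have hsum := ih I' (hmove.subset hI) (I' :: Ps) hrest rfl (by simpa using hlast)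
      have hfirst := congrArg (Nat.cast : ℕ → ℤ) (hmove.sum_ite hI)
      have hcard : (I'.card : ℤ) + 1 = K.card := mod_cast hmove.card
      rw [Nat.cast_sum, Nat.cast_add, Nat.cast_one] at hfirst
      simp only [pOfSeq, Nat.cast_add, Finset.sum_add_distrib]
      rw [hfirst, mul_add, hsum, ← hcard]
      ring
end

section
/- Let 𝓕 = (g₁,…,g_k) be a sequence of legal moves transforming the position I into the position J, and let A, A′ be two points of 𝔖 such that no position reachable from I by legal moves contains both A and A′ (i.e. Height(A, A′, I) = ∞). Then 𝔭(A,𝓕) + 𝔭(A′,𝓕) − Σ_{g : g(A)≠0 and g(A′)≠0} x(g) ≤ |I| − |J|. -/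
namespace LegalMove

variable {S I I' : Finset (ℤ × ℤ)} {g : (ℤ × ℤ) → ℤ}

theorem card_eq (h : LegalMove S I g I') : I.card = I'.card + 1 := by
  obtain ⟨P, d, hd, -, -, -, -, hP, hQ, hR, rfl⟩ := h
  have hPQ : P ≠ P + d := by simpa using ne_zero_of_mem_dirs hd
  have hsub : {P, P + d} ⊆ I := by simp [Finset.insert_subset_iff, hP, hQ]
  have hcard := Finset.card_sdiff_add_card_eq_card hsub
  rw [Finset.card_pair hPQ] at hcard
  rw [Finset.card_union_of_disjoint (by simp [hR]), Finset.card_singleton]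
  omega

/-- Every point moved by a legal move is occupied before or after the move. -/
theorem mem_or_mem_of_apply_ne_zero (h : LegalMove S I g I') {X : ℤ × ℤ} (hX : g X ≠ 0) :
    X ∈ I ∨ X ∈ I' := by
  obtain ⟨P, d, -, -, -, -, rfl, hP, hQ, -, rfl⟩ := h
  simp only [chi, Pi.add_apply, Pi.sub_apply] at hX
  grind

/-- A legal move does not remove the points at which it vanishes. -/
theorem mem_of_apply_eq_zero (h : LegalMove S I g I') {X : ℤ × ℤ} (hX : g X = 0)
    (hXI : X ∈ I) : X ∈ I' := by
  obtain ⟨P, d, -, -, -, -, rfl, -, -, hR, rfl⟩ := h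
  simp only [chi, Pi.add_apply, Pi.sub_apply] at hX
  grind

/-- If neither the position before nor the one after a legal move contains both `A` and `A'`,
the move contributes at most one to the pair count. -/
theorem pair_contribution_le_one (h : LegalMove S I g I') {A A' : ℤ × ℤ}
    (hI : ¬(A ∈ I ∧ A' ∈ I)) (hI' : ¬(A ∈ I' ∧ A' ∈ I')) :
    (if g A ≠ 0 then 1 else if A ∈ I then 1 else 0) +
        (if g A' ≠ 0 then 1 else if A' ∈ I then 1 else 0) ≤
      1 + (if g A ≠ 0 ∧ g A' ≠ 0 then 1 else 0 : ℕ) := by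
  have hne := @h.mem_or_mem_of_apply_ne_zero
  have heq := @h.mem_of_apply_eq_zero
  by_cases hA : g A = 0 <;> by_cases hA' : g A' = 0
  · have := heq hA
    have := heq hA'
    grind
  · have := heq hA
    have := hne hA'
    grind
  · have := hne hA
    have := heq hA'
    grind
  · simp [hA, hA']

end LegalMove

/-- If no position reachable from `I` contains both `A` and `A'`, then for any
sequence `𝓕` of legal moves from `I` to `J`,
`𝔭(A,𝓕) + 𝔭(A',𝓕) − Σ_{g(A)≠0 ∧ g(A')≠0} x(g) ≤ |I| − |J|`. -/
theorem pair_constraint (S I J : Finset (ℤ × ℤ)) (hI : I ⊆ S)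
    (Ls : List (Finset (ℤ × ℤ))) (L : List ((ℤ × ℤ) → ℤ))
    (hstep : StepList S Ls L) (hhead : Ls.head? = some I) (hlast : Ls.getLast? = some J)
    (A A' : ℤ × ℤ) (hA : A ∈ S) (hA' : A' ∈ S)
    (hinf : ∀ (L' : List ((ℤ × ℤ) → ℤ)) (K : Finset (ℤ × ℤ)),
      Transforms S L' I K → ¬(A ∈ K ∧ A' ∈ K)) :
    (pOfSeq A Ls L : ℤ) + (pOfSeq A' Ls L : ℤ) - (bothCount A A' L : ℤ)
      ≤ (I.card : ℤ) - (J.card : ℤ) := by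
  clear hI hA hA'
  induction L generalizing I Ls with
  | nil =>
    match Ls, hstep with
    | [K], _ =>
      simp only [List.head?_cons, List.getLast?_singleton, Option.some.injEq] at hhead hlast
      subst hhead hlast
      simp [pOfSeq, bothCount]
  | cons g L ih =>
    match Ls, hstep with
    | K :: I' :: Ps, ⟨hmove, hrest⟩ =>
      simp only [List.head?_cons, Option.some.injEq] at hhead
      subst hhead
      rw [List.getLast?_cons_cons] at hlast
      have hrec := ih I' (I' :: Ps) hrest rfl hlast
        fun L' M hM => hinf (g :: L') M ⟨I', hmove, hM⟩
      have hone := hmove.pair_contribution_le_one (hinf [] K rfl) (hinf [g] I' ⟨I', hmove, rfl⟩)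
      have hcard := hmove.card_eq
      simp only [pOfSeq, bothCount] at hrec ⊢
      omega
end
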